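/- Suppose a measurable function f on the ball B(z, 4R) ⊂ ℝ^d satisfies the Dini mean oscillation condition, and Φ : ℝ^d → ℝ^d is a diffeomorphism of class C¹ such that the partial derivatives ∂_{x_i}Φ^j are Hölder continuous and 2^{-1}‖x − y‖ ≤ ‖Φ(x) − Φ(y)‖ ≤ 2‖x − y‖ for all x, y ∈ ℝ^d. Then the function f ∘ Φ satisfies the Dini mean oscillation condition on the ball B(z', R), where z' = Φ^{-1}(z). -/

import Mathlib

open MeasureTheory Metric Set
noncomputable section

/-- Euclidean space ℝ^d. -/
abbrev E (d : ℕ) := EuclideanSpace ℝ (Fin d)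

/-- Partial derivative ∂_{x_i} φ. -/
def pd {d : ℕ} (i : Fin d) (φ : E d → ℝ) (x : E d) : ℝ :=
  fderiv ℝ φ x (EuclideanSpace.single i 1)

/-- Average of `f` over a set `s` (w.r.t. Lebesgue measure). -/
def setAvg {d : ℕ} (f : E d → ℝ) (s : Set (E d)) : ℝ :=
  (volume s).toReal⁻¹ * ∫ y in s, f y

/-- `f` satisfies the Dini mean oscillation condition on Ω: for some t₀ > 0 there is a
nonnegative function `w` with ∫₀^{t₀} w(r)/r dr < ∞ dominating the mean oscillations
of `f` over the sets Ω ∩ B(x,r). -/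
def DiniMeanOscillationOn {d : ℕ} (f : E d → ℝ) (Ω : Set (E d)) : Prop :=
  ∃ t₀ > (0 : ℝ), ∃ w : ℝ → ℝ, (∀ r, 0 ≤ w r) ∧
    IntegrableOn (fun r => w r / r) (Ioc (0 : ℝ) t₀) ∧
    ∀ r ∈ Ioc (0 : ℝ) t₀, ∀ x ∈ Ω,
      setAvg (fun y => |f y - setAvg f (Ω ∩ ball x r)|) (Ω ∩ ball x r) ≤ w r

open scoped ENNReal

theorem volume_ball_le {d : ℕ} (x y : E d) {s s' k : ℝ} (hs : 0 < s) (hs' : 0 < s')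
    (h : s ≤ k * s') :
    volume (ball x s) ≤ ENNReal.ofReal (k ^ d) * volume (ball y s') := by
  have hk : 0 < k := pos_of_mul_pos_left (hs.trans_le h) hs'.le
  rw [Measure.addHaar_ball_of_pos _ x hs, Measure.addHaar_ball_of_pos _ y hs', ← mul_assoc,
    ← ENNReal.ofReal_mul (by positivity), finrank_euclideanSpace_fin, ← mul_pow]
  gcongr

/-- A `K`-Lipschitz map of `ℝ^d` increases volumes at most by a constant factor. -/
theorem volume_image_le {d : ℕ} {K : NNReal} {T : E d → E d} (hT : LipschitzWith K T)
    (s : Set (E d)) : volume (T '' s) ≤ (K : ℝ≥0∞) ^ d * volume s := by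
  have h := hT.hausdorffMeasure_image_le (d := d) (by positivity) s
  rw [← EuclideanSpace.euclideanHausdorffMeasure_eq_volume,
    Measure.euclideanHausdorffMeasure_def]
  simp only [Measure.smul_apply, ENNReal.smul_def, smul_eq_mul]
  rw [ENNReal.rpow_natCast] at h
  rw [mul_left_comm]
  gcongr

/-- Change of variables inequality along a map with Lipschitz inverse. -/
theorem setLIntegral_comp_le {d : ℕ} {K : NNReal} {Φ Ψ : E d → E d} (hΦ : Measurable Φ)
    (hΨ : LipschitzWith K Ψ) (hinv₁ : Function.LeftInverse Ψ Φ)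
    (hinv₂ : Function.RightInverse Ψ Φ)
    {h : E d → ℝ≥0∞} (hh : Measurable h) {s t : Set (E d)} (ht : MeasurableSet t)
    (hst : ∀ y ∈ s, Φ y ∈ t) :
    ∫⁻ y in s, h (Φ y) ≤ (K : ℝ≥0∞) ^ d * ∫⁻ u in t, h u := by
  have hmap : Measure.map Φ volume ≤ (K : ℝ≥0∞) ^ d • (volume : Measure (E d)) := by
    refine Measure.le_iff.2 fun A hA => ?_
    rw [Measure.map_apply hΦ hA, ← Set.image_eq_preimage_of_inverse hinv₂ hinv₁]
    exact volume_image_le hΨ A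
  calc ∫⁻ y in s, h (Φ y) ≤ ∫⁻ y in Φ ⁻¹' t, h (Φ y) := lintegral_mono_set hst
    _ = ∫⁻ u in t, h u ∂(Measure.map Φ volume) := (setLIntegral_map ht hh hΦ).symm
    _ ≤ ∫⁻ u in t, h u ∂((K : ℝ≥0∞) ^ d • (volume : Measure (E d))) :=
        lintegral_mono' (Measure.restrict_mono subset_rfl hmap) le_rfl
    _ = _ := by rw [Measure.restrict_smul, lintegral_smul_measure, smul_eq_mul]

theorem enorm_sub_le_of_setLIntegral_le {α : Type*} [MeasurableSpace α] {μ : Measure α}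
    {g : α → ℝ} (hg : Measurable g) {B B' H : Set α} (hB : H ⊆ B) (hB' : H ⊆ B') {c c' : ℝ}
    {v v' M : ℝ≥0∞} (h : ∫⁻ y in B, ‖g y - c‖ₑ ∂μ ≤ v * μ B)
    (h' : ∫⁻ y in B', ‖g y - c'‖ₑ ∂μ ≤ v' * μ B') (hM : μ B ≤ M * μ H) (hM' : μ B' ≤ M * μ H)
    (hH : μ H ≠ 0) (hH' : μ H ≠ ∞) : ‖c - c'‖ₑ ≤ M * (v + v') := by
  rw [← ENNReal.mul_le_mul_iff_left hH hH']
  calc ‖c - c'‖ₑ * μ H = ∫⁻ _ in H, ‖c - c'‖ₑ ∂μ := by simp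
    _ ≤ ∫⁻ y in H, (‖g y - c‖ₑ + ‖g y - c'‖ₑ) ∂μ := by
        refine lintegral_mono fun y => ?_
        have : c - c' = (g y - c') - (g y - c) := by ring
        rw [this, add_comm]
        exact enorm_sub_le
    _ = ∫⁻ y in H, ‖g y - c‖ₑ ∂μ + ∫⁻ y in H, ‖g y - c'‖ₑ ∂μ :=
        lintegral_add_left (by fun_prop) _
    _ ≤ v * (M * μ H) + v' * (M * μ H) := by
        gcongr
        · exact (lintegral_mono_set hB).trans (h.trans (by gcongr))
        · exact (lintegral_mono_set hB').trans (h'.trans (by gcongr))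
    _ = M * (v + v') * μ H := by ring

/-- If the averages of `h` over the balls of radius `s` centred in `S'` are at most `a`, and `S'`
contains the `s`-neighbourhood of `S`, then `∫_S h ≤ a |S'|`. -/
theorem setLIntegral_le_of_ball_average_le {d : ℕ} {h : E d → ℝ≥0∞} (hh : Measurable h)
    {S S' : Set (E d)} (hS : MeasurableSet S) (hS' : MeasurableSet S') {s : ℝ} (hs : 0 < s)
    (hSS' : ∀ y ∈ S, ball y s ⊆ S') {a : ℝ≥0∞}
    (ha : ∀ p ∈ S', ∫⁻ y in ball p s, h y ≤ a * volume (ball p s)) :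
    ∫⁻ y in S, h y ≤ a * volume S' := by
  set b := volume (ball (0 : E d) s) with hb
  have hball : ∀ p : E d, volume (ball p s) = b := fun p => by
    rw [hb, Measure.addHaar_ball_center]
  have hb0 : b ≠ 0 := (measure_ball_pos _ _ hs).ne'
  have hb1 : b ≠ ∞ := measure_ball_lt_top.ne
  rw [← ENNReal.mul_le_mul_iff_left hb0 hb1]
  have hU : MeasurableSet {z : E d × E d | dist z.1 z.2 < s} :=
    measurableSet_lt (by fun_prop) measurable_const
  calc (∫⁻ y in S, h y) * b
      = ∫⁻ y in S, ∫⁻ p in S', {z : E d × E d | dist z.1 z.2 < s}.indicator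
          (fun z => h z.1) (y, p) := by
        rw [← lintegral_mul_const _ hh]
        refine setLIntegral_congr_fun hS fun y hy => ?_
        have : ∀ p, {z : E d × E d | dist z.1 z.2 < s}.indicator (fun z => h z.1) (y, p)
            = (ball y s).indicator (fun _ => h y) p := by
          intro p
          simp only [indicator, mem_ofPred_eq, mem_ball, dist_comm]
        simp only [this]
        rw [lintegral_indicator measurableSet_ball, setLIntegral_const,
          Measure.restrict_apply measurableSet_ball, inter_eq_left.2 (hSS' y hy), hball]
    _ = ∫⁻ p in S', ∫⁻ y in S, {z : E d × E d | dist z.1 z.2 < s}.indicator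
          (fun z => h z.1) (y, p) :=
        lintegral_lintegral_swap
          (((hh.comp measurable_fst).indicator hU).aemeasurable)
    _ ≤ ∫⁻ p in S', a * b := by
        refine setLIntegral_mono' hS' fun p hp => ?_
        have : ∀ y, {z : E d × E d | dist z.1 z.2 < s}.indicator (fun z => h z.1) (y, p)
            = (ball p s).indicator h y := by
          intro y
          simp only [indicator, mem_ofPred_eq, mem_ball]
        simp only [this]
        rw [← hball p]
        refine le_trans ?_ (ha p hp)
        rw [← lintegral_indicator measurableSet_ball]
        exact setLIntegral_le_lintegral _ _
    _ = a * volume S' * b := by rw [setLIntegral_const]; ring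

theorem ball_subset_image_homothety {V : Type*} [NormedAddCommGroup V] [NormedSpace ℝ V]
    {D : Set V} (hD : Convex ℝ D) {x₀ : V} {ρ : ℝ} (hball : ball x₀ ρ ⊆ D) {t t' : ℝ}
    (ht1 : t ≤ 1) (ht' : t' < t) {q : V} (hq : q ∈ D) :
    ball (AffineMap.homothety x₀ (1 - t) q) ((t - t') * ρ) ⊆
      AffineMap.homothety x₀ (1 - t') '' D := by
  intro u hu
  have h1 : 0 < 1 - t' := by linarith
  have h2 : 0 < t - t' := by linarith
  set e := u - AffineMap.homothety x₀ (1 - t) q with he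
  have hb : x₀ + (t - t')⁻¹ • e ∈ D := by
    apply hball
    rw [mem_ball, dist_eq_norm, he] at *
    rw [add_sub_cancel_left, norm_smul, norm_inv, Real.norm_of_nonneg h2.le]
    rw [inv_mul_lt_iff₀ h2]
    exact hu
  have hmem := hD hq hb (a := (1 - t) / (1 - t')) (b := (t - t') / (1 - t'))
    (div_nonneg (by linarith) h1.le) (div_nonneg h2.le h1.le) (by field_simp; ring)
  refine ⟨_, hmem, ?_⟩
  have hu' : u = e + AffineMap.homothety x₀ (1 - t) q := by rw [he]; abel
  rw [hu']
  simp only [AffineMap.homothety_apply, vsub_eq_sub, vadd_eq_add]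
  match_scalars
  all_goals field_simp
  all_goals ring

theorem image_homothety_subset {V : Type*} [NormedAddCommGroup V] [NormedSpace ℝ V]
    {D : Set V} (hD : Convex ℝ D) {x₀ : V} (hx₀ : x₀ ∈ D) {t : ℝ} (ht0 : 0 ≤ t) (ht1 : t ≤ 1) :
    AffineMap.homothety x₀ (1 - t) '' D ⊆ D := by
  rintro _ ⟨q, hq, rfl⟩
  rw [AffineMap.homothety_eq_lineMap]
  exact hD.lineMap_mem hx₀ hq ⟨by linarith, by linarith⟩

theorem volume_diff_image_homothety_le {d : ℕ} {D : Set (E d)} (hDo : IsOpen D)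
    (hD : Convex ℝ D) (hfin : volume D ≠ ∞) {x₀ : E d} (hx₀ : x₀ ∈ D) {t : ℝ} (ht0 : 0 ≤ t)
    (ht1 : t < 1) :
    volume (D \ AffineMap.homothety x₀ (1 - t) '' D) ≤ ENNReal.ofReal (d * t) * volume D := by
  have hopen : IsOpen (AffineMap.homothety x₀ (1 - t) '' D) :=
    AffineMap.homothety_isOpenMap x₀ _ (by linarith) _ hDo
  have hsub := image_homothety_subset hD hx₀ ht0 ht1.le
  rw [measure_sdiff hsub hopen.measurableSet.nullMeasurableSet (measure_ne_top_of_subset hsub hfin),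
    Measure.addHaar_image_homothety, finrank_euclideanSpace_fin,
    abs_of_nonneg (by have : 0 < 1 - t := by linarith
                      positivity), tsub_le_iff_right, ← add_mul,
    ← ENNReal.ofReal_add (by positivity) (by have : 0 < 1 - t := by linarith
                                             positivity)]
  nth_rw 1 [← one_mul (volume D)]
  gcongr
  rw [← ENNReal.ofReal_one]
  apply ENNReal.ofReal_le_ofReal
  have := one_add_mul_le_pow (a := -t) (by linarith) d
  rw [← sub_eq_add_neg] at this
  linarith

/-- The ratio of consecutive radii in the chains of balls. -/
def θ : ℝ := 63 / 64

theorem θ_pow_pos (n : ℕ) : 0 < θ ^ n := by unfold θ; positivity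

theorem θ_pow_le_one (n : ℕ) : θ ^ n ≤ 1 := pow_le_one₀ (by norm_num [θ]) (by norm_num [θ])

theorem θ_pow_succ (n : ℕ) : θ ^ (n + 1) = 63 / 64 * θ ^ n := by rw [pow_succ, θ]; ring

theorem sum_range_chain_le (M : ℝ≥0∞) (v : ℕ → ℝ≥0∞) (c : ℕ → ℝ)
    (h : ∀ i, ‖c i - c (i + 1)‖ₑ ≤ M * (v i + v (i + 1))) (n : ℕ) :
    ‖c n - c 0‖ₑ ≤ 2 * M * ∑ i ∈ Finset.range (n + 1), v i := by
  have key : ‖c n - c 0‖ₑ + M * v n ≤ 2 * M * ∑ i ∈ Finset.range (n + 1), v i := by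
    induction n with
    | zero =>
      simp only [sub_self, enorm_zero, zero_add, Finset.range_one, Finset.sum_singleton]
      rw [two_mul, add_mul]
      exact le_self_add
    | succ n ih =>
      rw [Finset.sum_range_succ, mul_add]
      calc ‖c (n + 1) - c 0‖ₑ + M * v (n + 1)
          ≤ (‖c n - c 0‖ₑ + ‖c n - c (n + 1)‖ₑ) + M * v (n + 1) := by
            gcongr
            have : c (n + 1) - c 0 = (c n - c 0) - (c n - c (n + 1)) := by ring
            rw [this]
            exact enorm_sub_le
        _ ≤ (‖c n - c 0‖ₑ + M * (v n + v (n + 1))) + M * v (n + 1) := by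
            gcongr; exact h n
        _ = (‖c n - c 0‖ₑ + M * v n) + 2 * M * v (n + 1) := by ring
        _ ≤ _ := by gcongr
  exact le_self_add.trans key

theorem tsum_mul_sum_range_le (v : ℕ → ℝ≥0∞) :
    ∑' j : ℕ, ENNReal.ofReal (θ ^ j) * ∑ i ∈ Finset.range (j + 3), v i ≤
      128 * ∑' i : ℕ, ENNReal.ofReal (θ ^ i) * v i := by
  have hpt : ∀ j : ℕ, ENNReal.ofReal (θ ^ j) * ∑ i ∈ Finset.range (j + 3), v i
      = ∑' i : ℕ, v i * (if i < j + 3 then ENNReal.ofReal (θ ^ j) else 0) := by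
    intro j
    rw [tsum_eq_sum (s := Finset.range (j + 3)), Finset.mul_sum]
    · refine Finset.sum_congr rfl fun i hi => ?_
      rw [if_pos (Finset.mem_range.1 hi), mul_comm]
    · intro i hi
      rw [if_neg (by simpa using hi), mul_zero]
  have hgeo : ∑' k : ℕ, ENNReal.ofReal (θ ^ k) = 64 := by
    rw [← ENNReal.ofReal_tsum_of_nonneg (fun n => (θ_pow_pos n).le)
      (summable_geometric_of_lt_one (by norm_num [θ]) (by norm_num [θ])),
      tsum_geometric_of_lt_one (by norm_num [θ]) (by norm_num [θ])]
    norm_num [θ]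
  have hcol : ∀ i : ℕ, ∑' j : ℕ, (if i < j + 3 then ENNReal.ofReal (θ ^ j) else 0) ≤
      128 * ENNReal.ofReal (θ ^ i) := by
    intro i
    have hsum : ∀ m : ℕ, ∑' j : ℕ, (if m ≤ j then ENNReal.ofReal (θ ^ j) else 0) =
        64 * ENNReal.ofReal (θ ^ m) := by
      intro m
      rw [← Summable.sum_add_tsum_nat_add' (k := m) ENNReal.summable, Finset.sum_eq_zero, zero_add]
      · simp only [le_add_iff_nonneg_left, zero_le, if_true]
        simp only [pow_add, ENNReal.ofReal_mul (θ_pow_pos _).le]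
        rw [ENNReal.tsum_mul_right, hgeo]
      · intro j hj
        rw [if_neg (by simpa using hj)]
    have heq : ∀ j, (i < j + 3) ↔ (i - 2 ≤ j) := fun j => by omega
    simp only [heq]
    rw [hsum]
    have h2 : θ ^ (i - 2) ≤ 2 * θ ^ i := by
      obtain hi | hi := le_or_gt 2 i
      · obtain ⟨k, rfl⟩ := Nat.exists_eq_add_of_le' hi
        have := θ_pow_pos k
        rw [show k + 2 - 2 = k by omega, show k + 2 = k + 1 + 1 by ring, θ_pow_succ, θ_pow_succ]
        linarith
      · rw [show i - 2 = 0 by omega]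
        interval_cases i <;> norm_num [θ]
    calc 64 * ENNReal.ofReal (θ ^ (i - 2)) ≤ 64 * ENNReal.ofReal (2 * θ ^ i) := by gcongr
      _ = 128 * ENNReal.ofReal (θ ^ i) := by
        rw [ENNReal.ofReal_mul (by norm_num), ← mul_assoc]
        norm_num
  simp only [hpt]
  rw [ENNReal.tsum_comm, ← ENNReal.tsum_mul_left]
  refine ENNReal.tsum_le_tsum fun i => ?_
  rw [ENNReal.tsum_mul_left]
  calc _ ≤ v i * (128 * ENNReal.ofReal (θ ^ i)) := by gcongr; exact hcol i
    _ = _ := by ring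

/-- Comparison of the value attached to a ball of `D` with that attached to the central ball,
through a chain of balls contained in the convex set `D`. -/
theorem enorm_sub_center_le {d : ℕ} {D : Set (E d)} (hD : Convex ℝ D) {x₀ : E d} {ρ : ℝ}
    (hρ : 0 < ρ) (hball : ball x₀ ρ ⊆ D) (hbdd : D ⊆ ball x₀ (4 * ρ)) {g : E d → ℝ}
    (hg : Measurable g) {v : ℝ → ℝ≥0∞} {c : E d → ℝ → ℝ}
    (hc : ∀ y s, 0 < s → s ≤ ρ / 8 → ball y (8 * s) ⊆ D →
      ∫⁻ u in ball y s, ‖g u - c y s‖ₑ ≤ v s * volume (ball y s))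
    {q : E d} (hq : q ∈ D) (n : ℕ) :
    ‖c (AffineMap.homothety x₀ (1 - θ ^ n) q) (θ ^ n * (ρ / 8)) - c x₀ (ρ / 8)‖ₑ ≤
      2 * ENNReal.ofReal (100 ^ d) * ∑ i ∈ Finset.range (n + 1), v (θ ^ i * (ρ / 8)) := by
  have h := sum_range_chain_le (ENNReal.ofReal (100 ^ d)) (fun i => v (θ ^ i * (ρ / 8)))
    (fun i => c (AffineMap.homothety x₀ (1 - θ ^ i) q) (θ ^ i * (ρ / 8))) ?_ n
  · simpa using h
  intro i
  have hin : ∀ i, ball (AffineMap.homothety x₀ (1 - θ ^ i) q) (8 * (θ ^ i * (ρ / 8))) ⊆ D := by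
    intro i
    have := ball_subset_image_homothety hD hball (θ_pow_le_one i) (θ_pow_pos i) hq
    simp only [sub_zero, AffineMap.homothety_one, AffineMap.coe_id, image_id] at this
    rwa [show 8 * (θ ^ i * (ρ / 8)) = θ ^ i * ρ by ring]
  have hi := θ_pow_pos i
  have hi' := θ_pow_succ i
  have hpos : ∀ i, 0 < θ ^ i * (ρ / 8) := fun i => mul_pos (θ_pow_pos i) (by positivity)
  have hle : ∀ i, θ ^ i * (ρ / 8) ≤ ρ / 8 := fun i =>
    mul_le_of_le_one_left (by positivity) (θ_pow_le_one i)
  have hq' : ‖q - x₀‖ < 4 * ρ := by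
    have := hbdd hq
    rwa [mem_ball, dist_eq_norm] at this
  refine enorm_sub_le_of_setLIntegral_le hg
    (H := ball (AffineMap.homothety x₀ (1 - θ ^ (i + 1)) q) (θ ^ (i + 1) * (ρ / 16)))
    ?_ ?_ (hc _ _ (hpos i) (hle i) (hin i))
    (hc _ _ (hpos (i + 1)) (hle (i + 1)) (hin (i + 1))) ?_ ?_ ?_ ?_
  · apply ball_subset_ball'
    have : dist (AffineMap.homothety x₀ (1 - θ ^ (i + 1)) q)
        (AffineMap.homothety x₀ (1 - θ ^ i) q) ≤ θ ^ i / 64 * (4 * ρ) := by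
      rw [dist_eq_norm, show AffineMap.homothety x₀ (1 - θ ^ (i + 1)) q -
        AffineMap.homothety x₀ (1 - θ ^ i) q = (θ ^ i / 64) • (q - x₀) by
          simp only [AffineMap.homothety_apply, vsub_eq_sub, vadd_eq_add, hi']
          module, norm_smul, Real.norm_of_nonneg (by positivity)]
      gcongr
    have h2 : θ ^ (i + 1) * (ρ / 16) ≤ θ ^ i * (ρ / 16) :=
      mul_le_mul_of_nonneg_right (by linarith) (by positivity)
    have h3 : θ ^ i / 64 * (4 * ρ) + θ ^ i * (ρ / 16) = θ ^ i * (ρ / 8) := by ring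
    linarith
  · apply ball_subset_ball
    have := hpos (i + 1)
    linarith
  · apply volume_ball_le _ _ (hpos i) (by rw [hi']; positivity)
    rw [hi']
    nlinarith
  · apply volume_ball_le _ _ (hpos (i + 1)) (by rw [hi']; positivity)
    rw [hi']
    nlinarith
  · exact (measure_ball_pos _ _ (by rw [hi']; positivity)).ne'
  · exact measure_ball_lt_top.ne

/-- The mean oscillation over a convex set is controlled by those over balls well inside it, with
a gain for small balls. -/
theorem setLIntegral_convex_le {d : ℕ} {D : Set (E d)} (hDo : IsOpen D) (hD : Convex ℝ D)
    {x₀ : E d} {ρ : ℝ}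
    (hρ : 0 < ρ) (hball : ball x₀ ρ ⊆ D) (hbdd : D ⊆ ball x₀ (4 * ρ)) {g : E d → ℝ}
    (hg : Measurable g) {v : ℝ → ℝ≥0∞}
    (hv : ∀ y s, 0 < s → s ≤ ρ / 8 → ball y (8 * s) ⊆ D →
      ∃ c : ℝ, ∫⁻ u in ball y s, ‖g u - c‖ₑ ≤ v s * volume (ball y s)) :
    ∃ c : ℝ, ∫⁻ u in D, ‖g u - c‖ₑ ≤
      ENNReal.ofReal (768 * (d + 1) * 100 ^ d) * volume D *
        ∑' i : ℕ, ENNReal.ofReal (θ ^ i) * v (θ ^ i * (ρ / 8)) := by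
  have hfin : volume D ≠ ∞ := measure_ne_top_of_subset hbdd measure_ball_lt_top.ne
  have hx₀ : x₀ ∈ D := hball (mem_ball_self hρ)
  choose! c hc using hv
  refine ⟨c x₀ (ρ / 8), ?_⟩
  set h : E d → ℝ≥0∞ := fun u => ‖g u - c x₀ (ρ / 8)‖ₑ with hh
  have hhm : Measurable h := by fun_prop
  set M := ENNReal.ofReal (100 ^ d) with hM
  set V : ℕ → ℝ≥0∞ := fun i => v (θ ^ i * (ρ / 8)) with hV
  let A : ℕ → Set (E d) := fun j => {u | j ≠ 0 ∧ u ∈ AffineMap.homothety x₀ (1 - θ ^ j) '' D}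
  have hθ1 : ∀ j, j ≠ 0 → θ ^ j < 1 := fun j hj =>
    pow_lt_one₀ (by norm_num [θ]) (by norm_num [θ]) hj
  have hAm : ∀ j, MeasurableSet (A j) := by
    intro j
    by_cases hj : j = 0
    · have : A j = ∅ := by ext; simp [A, hj]
      rw [this]; exact MeasurableSet.empty
    · have : A j = AffineMap.homothety x₀ (1 - θ ^ j) '' D := by ext; simp [A, hj]
      rw [this]
      exact (AffineMap.homothety_isOpenMap x₀ _ (by linarith [hθ1 j hj]) _ hDo).measurableSet
  have hAD : ∀ j, A j ⊆ D := fun j u hu =>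
    image_homothety_subset hD hx₀ (θ_pow_pos j).le (θ_pow_le_one j) hu.2
  have hvol : ∀ j, volume (D \ A j) ≤ ENNReal.ofReal ((d + 1) * θ ^ j) * volume D := by
    intro j
    by_cases hj : j = 0
    · calc volume (D \ A j) ≤ 1 * volume D := by
            rw [one_mul]; exact measure_mono sdiff_subset
        _ ≤ _ := by
            gcongr
            rw [← ENNReal.ofReal_one]
            apply ENNReal.ofReal_le_ofReal
            simp [hj]
    · have : A j = AffineMap.homothety x₀ (1 - θ ^ j) '' D := by ext; simp [A, hj]
      rw [this]
      refine (volume_diff_image_homothety_le hDo hD hfin hx₀ (θ_pow_pos j).le (hθ1 j hj)).trans ?_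
      gcongr
      · exact (θ_pow_pos j).le
      · linarith
  have hcover : D ⊆ ⋃ j, (A (j + 1) \ A j) := by
    intro y hy
    have hex : ∃ n, y ∈ A n := by
      have ht : Filter.Tendsto (fun n : ℕ => AffineMap.homothety x₀ ((1 - θ ^ n)⁻¹) y)
          Filter.atTop (nhds y) := by
        have h0 : Filter.Tendsto (fun n : ℕ => θ ^ n) Filter.atTop (nhds 0) :=
          tendsto_pow_atTop_nhds_zero_of_lt_one (by norm_num [θ]) (by norm_num [θ])
        have h1 : Filter.Tendsto (fun n : ℕ => (1 - θ ^ n)⁻¹) Filter.atTop (nhds 1) := by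
          simpa using (h0.const_sub 1).inv₀ (by norm_num)
        simp only [AffineMap.homothety_apply, vsub_eq_sub, vadd_eq_add]
        simpa using (h1.smul_const (y - x₀)).add_const x₀
      obtain ⟨n, hn, hn0⟩ := ((ht.eventually (hDo.mem_nhds hy)).and
        (Filter.eventually_ne_atTop 0)).exists
      refine ⟨n, hn0, _, hn, ?_⟩
      have hne : (1 - θ ^ n) ≠ 0 := by linarith [hθ1 n hn0]
      rw [← AffineMap.homothety_mul_apply, mul_inv_cancel₀ hne]
      simp
    classical
    have hspec := Nat.find_spec hex
    have hne : Nat.find hex ≠ 0 := hspec.1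
    obtain ⟨m, hm⟩ := Nat.exists_eq_succ_of_ne_zero hne
    rw [hm] at hspec
    exact mem_iUnion.2 ⟨m, hspec, Nat.find_min hex (by omega)⟩
  have hshell : ∀ j, ∫⁻ u in A (j + 1) \ A j, h u ≤
      3 * M * (∑ i ∈ Finset.range (j + 3), V i) *
        (ENNReal.ofReal (2 * (d + 1) * θ ^ j) * volume D) := by
    intro j
    have hj := θ_pow_pos j
    have hs : 0 < θ ^ j * (ρ / 100) := by positivity
    have hnear : ∀ y ∈ A (j + 1) \ A j, ball y (θ ^ j * (ρ / 100)) ⊆ A (j + 2) \ A (j - 1) := by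
      rintro _ ⟨⟨-, q, hq, rfl⟩, hyj⟩ p hp
      refine ⟨⟨by omega, ?_⟩, ?_⟩
      · apply ball_subset_image_homothety hD hball (θ_pow_le_one (j + 1)) (t' := θ ^ (j + 2)) ?_ hq
        · refine ball_subset_ball ?_ hp
          rw [θ_pow_succ (j + 1), θ_pow_succ j]
          nlinarith
        · have := θ_pow_pos (j + 1)
          rw [θ_pow_succ (j + 1)]
          linarith
      · rintro ⟨hj1, q', hq', rfl⟩
        obtain ⟨k, rfl⟩ : ∃ k, j = k + 1 := ⟨j - 1, by omega⟩
        simp only [Nat.add_sub_cancel] at *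
        refine hyj ⟨by omega, ?_⟩
        have hk := θ_pow_pos k
        rw [mem_ball_comm] at hp
        refine ball_subset_image_homothety hD hball (θ_pow_le_one k) (t' := θ ^ (k + 1)) ?_ hq'
          (ball_subset_ball ?_ hp)
        · rw [θ_pow_succ k]; linarith
        · rw [θ_pow_succ k]; nlinarith
    refine (setLIntegral_le_of_ball_average_le hhm ((hAm _).diff (hAm _))
      ((hAm (j + 2)).diff (hAm (j - 1))) hs hnear
      (a := 3 * M * (∑ i ∈ Finset.range (j + 3), V i)) ?_).trans ?_
    · rintro p ⟨⟨-, q, hq, rfl⟩, -⟩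
      set p := AffineMap.homothety x₀ (1 - θ ^ (j + 2)) q with hp
      have hj2 : θ ^ (j + 2) = 63 / 64 * (63 / 64 * θ ^ j) := by
        rw [θ_pow_succ (j + 1), θ_pow_succ j]
      have hin : ball p (8 * (θ ^ (j + 2) * (ρ / 8))) ⊆ D := by
        have := ball_subset_image_homothety hD hball (θ_pow_le_one _) (θ_pow_pos (j + 2)) hq
        simp only [sub_zero, AffineMap.homothety_one, AffineMap.coe_id, image_id] at this
        rwa [show 8 * (θ ^ (j + 2) * (ρ / 8)) = θ ^ (j + 2) * ρ by ring]
      have hs2 : 0 < θ ^ (j + 2) * (ρ / 8) := by rw [hj2]; positivity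
      have h1 := hc p _ hs2 (mul_le_of_le_one_left (by positivity) (θ_pow_le_one _)) hin
      have h2 := enorm_sub_center_le hD hρ hball hbdd hg hc hq (j + 2)
      rw [← hp] at h2
      set c' := c p (θ ^ (j + 2) * (ρ / 8))
      set b := volume (ball p (θ ^ j * (ρ / 100)))
      calc ∫⁻ y in ball p (θ ^ j * (ρ / 100)), h y
          ≤ ∫⁻ y in ball p (θ ^ j * (ρ / 100)), (‖g y - c'‖ₑ + ‖c' - c x₀ (ρ / 8)‖ₑ) := by
            refine lintegral_mono fun y => ?_
            rw [hh]
            have : g y - c x₀ (ρ / 8) = (g y - c') + (c' - c x₀ (ρ / 8)) := by ring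
            simp only [this]
            exact enorm_add_le _ _
        _ = (∫⁻ y in ball p (θ ^ j * (ρ / 100)), ‖g y - c'‖ₑ) + ‖c' - c x₀ (ρ / 8)‖ₑ * b := by
            rw [lintegral_add_left (by fun_prop), setLIntegral_const]
        _ ≤ V (j + 2) * (M * b) +
            (2 * M * ∑ i ∈ Finset.range (j + 3), V i) * b := by
            gcongr
            refine (lintegral_mono_set (ball_subset_ball ?_)).trans (h1.trans ?_)
            · rw [hj2]; nlinarith
            · gcongr
              apply volume_ball_le _ _ hs2 hs
              rw [hj2]; nlinarith
        _ ≤ (∑ i ∈ Finset.range (j + 3), V i) * (M * b) +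
            (2 * M * ∑ i ∈ Finset.range (j + 3), V i) * b := by
            gcongr
            exact Finset.single_le_sum (f := V) (fun _ _ => zero_le)
              (Finset.mem_range.2 (by omega))
        _ = _ := by ring
    · gcongr
      calc volume (A (j + 2) \ A (j - 1)) ≤ volume (D \ A (j - 1)) :=
            measure_mono (sdiff_subset_sdiff_left (hAD _))
        _ ≤ _ := hvol _
        _ ≤ _ := by
            gcongr ENNReal.ofReal ?_ * _
            have : θ ^ (j - 1) ≤ 2 * θ ^ j := by
              obtain rfl | hj0 := Nat.eq_zero_or_pos j
              · norm_num
              · obtain ⟨k, rfl⟩ : ∃ k, j = k + 1 := ⟨j - 1, by omega⟩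
                have := θ_pow_pos k
                rw [Nat.add_sub_cancel, θ_pow_succ]
                linarith
            rw [mul_comm (2 : ℝ), mul_assoc]
            gcongr
  calc ∫⁻ u in D, h u ≤ ∫⁻ u in ⋃ j, (A (j + 1) \ A j), h u := lintegral_mono_set hcover
    _ ≤ ∑' j, ∫⁻ u in A (j + 1) \ A j, h u := lintegral_iUnion_le _ _
    _ ≤ ∑' j, 3 * M * (∑ i ∈ Finset.range (j + 3), V i) *
        (ENNReal.ofReal (2 * (d + 1) * θ ^ j) * volume D) := ENNReal.tsum_le_tsum hshell
    _ = ∑' j, (3 * M * ENNReal.ofReal (2 * (d + 1)) * volume D) *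
        (ENNReal.ofReal (θ ^ j) * ∑ i ∈ Finset.range (j + 3), V i) := by
        refine tsum_congr fun j => ?_
        rw [ENNReal.ofReal_mul (by positivity)]
        ring
    _ ≤ (3 * M * ENNReal.ofReal (2 * (d + 1)) * volume D) *
        (128 * ∑' i : ℕ, ENNReal.ofReal (θ ^ i) * V i) := by
        rw [ENNReal.tsum_mul_left]
        gcongr
        exact tsum_mul_sum_range_le V
    _ = _ := by
        have : ENNReal.ofReal (768 * (d + 1) * 100 ^ d) =
            3 * M * ENNReal.ofReal (2 * (d + 1)) * 128 := by
          rw [hM, show (768 : ℝ) * (d + 1) * 100 ^ d = 3 * 100 ^ d * (2 * (d + 1)) * 128 by ring,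
            ENNReal.ofReal_mul (by positivity), ENNReal.ofReal_mul (by positivity),
            ENNReal.ofReal_mul (by positivity)]
          norm_num
        rw [this]
        ring

theorem lintegral_sq_inv_mul_lintegral_Ioc_le {T : ℝ} {φ : ℝ → ℝ≥0∞}
    (hφ : AEMeasurable φ (volume.restrict (Ioc 0 T))) :
    ∫⁻ r in Ioc 0 T, ENNReal.ofReal (r ^ (-2 : ℝ)) * ∫⁻ σ in Ioc 0 r, φ σ ≤
      ∫⁻ σ in Ioc 0 T, ENNReal.ofReal σ⁻¹ * φ σ := by
  have hU : MeasurableSet {p : ℝ × ℝ | p.2 ≤ p.1} := measurableSet_le measurable_snd measurable_fst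
  calc ∫⁻ r in Ioc 0 T, ENNReal.ofReal (r ^ (-2 : ℝ)) * ∫⁻ σ in Ioc 0 r, φ σ
      = ∫⁻ r in Ioc 0 T, ∫⁻ σ in Ioc 0 T, {p : ℝ × ℝ | p.2 ≤ p.1}.indicator
          (fun p => ENNReal.ofReal (p.1 ^ (-2 : ℝ)) * φ p.2) (r, σ) := by
        refine setLIntegral_congr_fun measurableSet_Ioc fun r hr => ?_
        have : ∀ σ, {p : ℝ × ℝ | p.2 ≤ p.1}.indicator
            (fun p => ENNReal.ofReal (p.1 ^ (-2 : ℝ)) * φ p.2) (r, σ) =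
            (Iic r).indicator (fun σ => ENNReal.ofReal (r ^ (-2 : ℝ)) * φ σ) σ := by
          intro σ
          simp only [indicator, mem_ofPred_eq, mem_Iic]
        simp only [this]
        rw [lintegral_indicator measurableSet_Iic, Measure.restrict_restrict measurableSet_Iic,
          show Iic r ∩ Ioc 0 T = Ioc 0 r by
            ext σ
            simp only [mem_inter_iff, mem_Iic, mem_Ioc]
            exact ⟨fun h => ⟨h.2.1, h.1⟩, fun h => ⟨h.2, h.1, h.2.trans hr.2⟩⟩,
          lintegral_const_mul' _ _ ENNReal.ofReal_ne_top]
    _ = ∫⁻ σ in Ioc 0 T, ∫⁻ r in Ioc 0 T, {p : ℝ × ℝ | p.2 ≤ p.1}.indicator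
          (fun p => ENNReal.ofReal (p.1 ^ (-2 : ℝ)) * φ p.2) (r, σ) := by
        refine lintegral_lintegral_swap (AEMeasurable.indicator ?_ hU)
        exact AEMeasurable.mul (by fun_prop) hφ.comp_snd
    _ ≤ ∫⁻ σ in Ioc 0 T, ENNReal.ofReal σ⁻¹ * φ σ := by
        refine setLIntegral_mono' measurableSet_Ioc fun σ hσ => ?_
        have : ∀ r, {p : ℝ × ℝ | p.2 ≤ p.1}.indicator
            (fun p => ENNReal.ofReal (p.1 ^ (-2 : ℝ)) * φ p.2) (r, σ) =
            (Ici σ).indicator (fun r => ENNReal.ofReal (r ^ (-2 : ℝ)) * φ σ) r := by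
          intro r
          simp only [indicator, mem_ofPred_eq, mem_Ici]
        simp only [this]
        refine (setLIntegral_le_lintegral _ _).trans ?_
        rw [lintegral_indicator measurableSet_Ici, lintegral_mul_const _ (by fun_prop)]
        gcongr
        rw [setLIntegral_congr Ioi_ae_eq_Ici.symm, ← ofReal_integral_eq_lintegral_ofReal
          (integrableOn_Ioi_rpow_of_lt (by norm_num) hσ.1)
          ((ae_restrict_mem measurableSet_Ioi).mono fun r hr =>
            Real.rpow_nonneg (hσ.1.trans hr).le _),
          integral_Ioi_rpow_of_lt (by norm_num) hσ.1]
        apply le_of_eq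
        norm_num
        rw [Real.rpow_neg_one]

theorem tsum_setLAverage_le {s : ℝ} (hs : 0 < s) (φ : ℝ → ℝ≥0∞) :
    ∑' i : ℕ, ENNReal.ofReal (θ ^ i) *
        ⨍⁻ σ in Ioc (2 * (θ ^ i * s)) (128 / 63 * (θ ^ i * s)), φ σ ∂volume ≤
      (ENNReal.ofReal (2 / 63 * s))⁻¹ * ∫⁻ σ in Ioc 0 (128 / 63 * s), φ σ := by
  have hterm : ∀ i : ℕ, ENNReal.ofReal (θ ^ i) *
        ⨍⁻ σ in Ioc (2 * (θ ^ i * s)) (128 / 63 * (θ ^ i * s)), φ σ ∂volume =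
      (ENNReal.ofReal (2 / 63 * s))⁻¹ *
        ∫⁻ σ in Ioc (128 / 63 * s * θ ^ (i + 1)) (128 / 63 * s * θ ^ i), φ σ := by
    intro i
    have hi := θ_pow_pos i
    rw [setLAverage_eq, Real.volume_Ioc, θ_pow_succ, ENNReal.div_eq_inv_mul,
      show 128 / 63 * (θ ^ i * s) - 2 * (θ ^ i * s) = θ ^ i * (2 / 63 * s) by ring,
      ENNReal.ofReal_mul hi.le, ENNReal.mul_inv (Or.inr ENNReal.ofReal_ne_top)
        (Or.inl ENNReal.ofReal_ne_top), ← mul_assoc, ← mul_assoc,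
      ENNReal.mul_inv_cancel (by simpa using hi) ENNReal.ofReal_ne_top, one_mul,
      show 2 * (θ ^ i * s) = 128 / 63 * s * (63 / 64 * θ ^ i) by ring,
      show 128 / 63 * (θ ^ i * s) = 128 / 63 * s * θ ^ i by ring]
  simp only [hterm]
  rw [ENNReal.tsum_mul_left]
  gcongr
  have hanti : Antitone fun i : ℕ => 128 / 63 * s * θ ^ i := by
    refine antitone_nat_of_succ_le fun i => ?_
    have := θ_pow_pos i
    gcongr ?_ * ?_
    rw [θ_pow_succ]
    linarith
  refine (lintegral_iUnion (fun _ => measurableSet_Ioc)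
    hanti.pairwise_disjoint_on_Ioc_succ φ).symm.trans_le ?_
  refine lintegral_mono_set (iUnion_subset fun i => ?_)
  have := θ_pow_pos (Order.succ i)
  exact Ioc_subset_Ioc (by positivity) (mul_le_of_le_one_right (by positivity) (θ_pow_le_one i))

theorem setAvg_abs_sub_setAvg_le {d : ℕ} {g : E d → ℝ} {D : Set (E d)} (hg : IntegrableOn g D)
    (h0 : volume D ≠ 0) (hfin : volume D ≠ ∞) {c : ℝ} {a : ℝ≥0∞} (ha : a ≠ ∞)
    (h : ∫⁻ u in D, ‖g u - c‖ₑ ≤ a * volume D) :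
    setAvg (fun y => |g y - setAvg g D|) D ≤ (2 * a).toReal := by
  set m := setAvg g D with hm
  set b := (volume D).toReal with hb
  have hbpos : 0 < b := ENNReal.toReal_pos h0 hfin
  have hconst : ∀ k : ℝ, IntegrableOn (fun _ => k) D := fun k => integrableOn_const hfin
  have hgc : IntegrableOn (fun u => g u - c) D := hg.sub (hconst c)
  have h1 : ∫ u in D, |g u - c| ≤ a.toReal * b := by
    have := ofReal_integral_norm_eq_lintegral_enorm hgc
    rw [← this] at h
    simp only [Real.norm_eq_abs] at h
    have := ENNReal.toReal_mono (ENNReal.mul_ne_top ha hfin) h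
    rwa [ENNReal.toReal_ofReal (integral_nonneg fun _ => abs_nonneg _), ENNReal.toReal_mul] at this
  have h2 : b * |c - m| ≤ a.toReal * b := by
    have : b * (m - c) = ∫ u in D, (g u - c) := by
      rw [integral_sub hg (hconst c), setIntegral_const, smul_eq_mul, hm, setAvg, ← hb, mul_sub,
        ← mul_assoc, mul_inv_cancel₀ hbpos.ne', one_mul]
      rfl
    rw [abs_sub_comm, ← abs_of_pos hbpos, ← abs_mul, abs_of_pos hbpos, this]
    exact (abs_integral_le_integral_abs).trans h1
  have h3 : ∫ u in D, |g u - m| ≤ (∫ u in D, |g u - c|) + b * |c - m| := by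
    have : ∫ u in D, (|g u - c| + |c - m|) = (∫ u in D, |g u - c|) + b * |c - m| := by
      rw [integral_add hgc.abs (hconst _), setIntegral_const, smul_eq_mul]
      rfl
    rw [← this]
    exact integral_mono (hg.sub (hconst m)).abs (hgc.abs.add (hconst _))
      fun u => abs_sub_le _ _ _
  rw [setAvg, ← hb, inv_mul_le_iff₀ hbpos, ENNReal.toReal_mul, ENNReal.toReal_ofNat]
  linarith

/-- Two balls of comparable size meet in a set that contains a ball of comparable size. -/
theorem exists_ball_subset_inter {d : ℕ} {z x : E d} {R r : ℝ} (hr : 0 < r) (hrR : r ≤ R)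
    (hx : x ∈ ball z R) : ∃ x₀, ball x₀ (r / 2) ⊆ ball z R ∩ ball x r ∧
      ball z R ∩ ball x r ⊆ ball x₀ (4 * (r / 2)) := by
  rw [mem_ball] at hx
  obtain h | h := lt_or_ge (dist x z) (r / 2)
  · refine ⟨z, subset_inter (ball_subset_ball (by linarith)) (ball_subset_ball' ?_),
      inter_subset_right.trans (ball_subset_ball' ?_)⟩
    · rw [dist_comm]; linarith
    · linarith
  · have hd : 0 < dist x z := by linarith
    set x₀ := AffineMap.lineMap x z (r / 2 / dist x z) with hx₀
    have h1 : dist x₀ x = r / 2 := by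
      rw [hx₀, dist_lineMap_left, Real.norm_of_nonneg (by positivity)]
      field_simp
    have h2 : dist x₀ z = dist x z - r / 2 := by
      rw [hx₀, dist_lineMap_right, Real.norm_of_nonneg]
      · field_simp
      · rw [sub_nonneg, div_le_one hd]; exact h
    refine ⟨x₀, subset_inter (ball_subset_ball' ?_) (ball_subset_ball' ?_),
      inter_subset_right.trans (ball_subset_ball' ?_)⟩
    · linarith
    · linarith
    · rw [dist_comm]; linarith

/-- A mean oscillation bound for `f` on `B(Φ y, σ)` gives one for `f ∘ Φ` on `B(y, s)`, provided
that `f ∘ Φ` is integrable on a set containing `Φ⁻¹ (B(Φ y, σ))`. -/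
theorem setLIntegral_comp_sub_le {d : ℕ} {f : E d → ℝ} (hf : Measurable f) {Φ Ψ : E d → E d}
    (hΦ : LipschitzWith 2 Φ) (hΨ : LipschitzWith 2 Ψ)
    (hinv₁ : Function.LeftInverse Ψ Φ) (hinv₂ : Function.RightInverse Ψ Φ) {D : Set (E d)}
    (hD : MeasurableSet D) (hint : IntegrableOn (f ∘ Φ) D) {y : E d} {s σ : ℝ} (hs : 0 < s)
    (hsσ : 2 * s ≤ σ) (hσ4 : σ ≤ 4 * s) (hball : ball y (8 * s) ⊆ D) {a : ℝ}
    (ha : setAvg (fun u => |f u - setAvg f (ball (Φ y) σ)|) (ball (Φ y) σ) ≤ a) :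
    ∫⁻ u in ball y s, ‖(f ∘ Φ) u - setAvg f (ball (Φ y) σ)‖ₑ ≤
      2 ^ d * ENNReal.ofReal (4 ^ d) * ENNReal.ofReal a * volume (ball y s) := by
  have hσ : 0 < σ := by linarith
  set c := setAvg f (ball (Φ y) σ)
  have hΨmem : ∀ u ∈ ball (Φ y) σ, Ψ u ∈ D := by
    intro u hu
    apply hball
    have := hΨ.dist_le_mul u (Φ y)
    rw [hinv₁] at this
    rw [mem_ball] at hu ⊢
    push_cast at this
    linarith
  have hfint : IntegrableOn f (ball (Φ y) σ) := by
    refine ⟨hf.aestronglyMeasurable, ?_⟩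
    have := setLIntegral_comp_le hΨ.continuous.measurable hΦ hinv₂ hinv₁
      (h := fun u => ‖(f ∘ Φ) u‖ₑ) (hf.comp hΦ.continuous.measurable).enorm hD hΨmem
    simp only [Function.comp, hinv₂ _] at this
    refine this.trans_lt (ENNReal.mul_lt_top (by simp) hint.2)
  have hfin : volume (ball (Φ y) σ) ≠ ∞ := measure_ball_lt_top.ne
  have hpos : 0 < (volume (ball (Φ y) σ)).toReal :=
    ENNReal.toReal_pos (measure_ball_pos _ _ hσ).ne' hfin
  have hosc : ∫⁻ u in ball (Φ y) σ, ‖f u - c‖ₑ ≤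
      ENNReal.ofReal a * volume (ball (Φ y) σ) := by
    have hi : IntegrableOn (fun u => f u - c) (ball (Φ y) σ) :=
      hfint.sub (integrableOn_const hfin)
    rw [← ofReal_integral_norm_eq_lintegral_enorm hi]
    rw [setAvg, inv_mul_le_iff₀ hpos, mul_comm] at ha
    refine (ENNReal.ofReal_le_ofReal ha).trans ?_
    rw [ENNReal.ofReal_mul' hpos.le, ENNReal.ofReal_toReal hfin]
  calc ∫⁻ u in ball y s, ‖(f ∘ Φ) u - c‖ₑ
      ≤ 2 ^ d * ∫⁻ u in ball (Φ y) σ, ‖f u - c‖ₑ := by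
        refine setLIntegral_comp_le (h := fun u => ‖f u - c‖ₑ) hΦ.continuous.measurable hΨ
          hinv₁ hinv₂ (by fun_prop) measurableSet_ball fun u hu => ?_
        have := hΦ.dist_le_mul u y
        rw [mem_ball] at hu ⊢
        push_cast at this
        linarith
    _ ≤ 2 ^ d * (ENNReal.ofReal a * (ENNReal.ofReal (4 ^ d) * volume (ball y s))) := by
        gcongr
        refine hosc.trans ?_
        gcongr
        exact volume_ball_le _ _ hσ hs hσ4
    _ = _ := by ring

/-- Lemma, part (i): the Dini mean oscillation condition is preserved by
composition with a C¹ bi-Lipschitz diffeomorphism with Hölder continuous partial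
derivatives. -/
theorem dini_mean_oscillation_compose_diffeomorphism
    {d : ℕ} (f : E d → ℝ) (hf : Measurable f) (z : E d) (R : ℝ) (hR : 0 < R)
    (hDMO : DiniMeanOscillationOn f (ball z (4 * R)))
    (Φ Ψ : E d → E d) (hΦ : ContDiff ℝ 1 Φ) (hΨ : ContDiff ℝ 1 Ψ)
    (hinv₁ : Function.LeftInverse Ψ Φ) (hinv₂ : Function.RightInverse Ψ Φ)
    (hHolder : ∀ i k : Fin d, ∃ (C α : NNReal), 0 < α ∧ α ≤ 1 ∧
      HolderWith C α (fun y => pd i (fun x => Φ x k) y))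
    (hbilip : ∀ x y : E d,
      2⁻¹ * ‖x - y‖ ≤ ‖Φ x - Φ y‖ ∧ ‖Φ x - Φ y‖ ≤ 2 * ‖x - y‖) :
    DiniMeanOscillationOn (f ∘ Φ) (ball (Ψ z) R) := by
  have hΦL : LipschitzWith 2 Φ := LipschitzWith.of_dist_le_mul fun x y => by
    rw [dist_eq_norm, dist_eq_norm]; exact (hbilip x y).2
  have hΨL : LipschitzWith 2 Ψ := LipschitzWith.of_dist_le_mul fun x y => by
    have := (hbilip (Ψ x) (Ψ y)).1
    rw [hinv₂, hinv₂] at this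
    rw [dist_eq_norm, dist_eq_norm]
    push_cast
    linarith
  obtain ⟨t₀, ht₀, w, hw0, hwint, hw⟩ := hDMO
  set φ : ℝ → ℝ≥0∞ := fun σ => ENNReal.ofReal (w σ) with hφ
  have hφm : AEMeasurable φ (volume.restrict (Ioc 0 t₀)) := by
    refine AEMeasurable.ennreal_ofReal ?_
    refine (aemeasurable_id.mul hwint.1.aemeasurable).congr ?_
    filter_upwards [ae_restrict_mem measurableSet_Ioc] with r hr
    simp only [Pi.mul_apply, id]
    rw [mul_div_cancel₀ _ hr.1.ne']
  have hφdiv : ∫⁻ σ in Ioc 0 t₀, ENNReal.ofReal σ⁻¹ * φ σ < ∞ := by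
    have := hwint.2
    rw [hasFiniteIntegral_iff_enorm] at this
    convert this using 1
    refine setLIntegral_congr_fun measurableSet_Ioc fun σ hσ => ?_
    have hσ' : 0 ≤ σ⁻¹ := inv_nonneg.2 hσ.1.le
    rw [hφ, ← ENNReal.ofReal_mul hσ', Real.enorm_of_nonneg (div_nonneg (hw0 σ) hσ.1.le),
      div_eq_inv_mul]
  set F : ℝ → ℝ≥0∞ := fun r => ∫⁻ σ in Ioc 0 r, φ σ with hF
  have hFm : Measurable F :=
    Monotone.measurable fun a b hab => lintegral_mono_set (Ioc_subset_Ioc_right hab)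
  have hFfin : ∀ r ≤ t₀, F r ≠ ∞ := by
    intro r hr
    refine ne_of_lt (lt_of_le_of_lt ?_ (ENNReal.mul_lt_top (ENNReal.ofReal_lt_top (r := t₀)) hφdiv))
    rw [← lintegral_const_mul' _ _ ENNReal.ofReal_ne_top]
    refine (lintegral_mono_set (Ioc_subset_Ioc_right hr)).trans
      (setLIntegral_mono' measurableSet_Ioc fun σ hσ => ?_)
    rw [← mul_assoc, ← ENNReal.ofReal_mul ht₀.le]
    refine le_mul_of_one_le_left' ?_
    rw [← ENNReal.ofReal_one]
    apply ENNReal.ofReal_le_ofReal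
    rw [← div_eq_mul_inv, one_le_div hσ.1]
    exact hσ.2
  set C : ℝ≥0∞ := 2 * (ENNReal.ofReal (768 * (d + 1) * 100 ^ d) *
    (2 ^ d * ENNReal.ofReal (4 ^ d)) * 504) with hC
  have hCfin : C ≠ ∞ := by
    rw [hC]
    finiteness
  set T := min t₀ R with hT
  have hTpos : 0 < T := lt_min ht₀ hR
  refine ⟨T, hTpos, fun r => (C * (ENNReal.ofReal r⁻¹ * F r)).toReal,
    fun r => ENNReal.toReal_nonneg, ?_, ?_⟩
  · have hI : IntegrableOn (fun r => (C * (ENNReal.ofReal (r ^ (-2 : ℝ)) * F r)).toReal)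
        (Ioc 0 T) := by
      refine integrable_toReal_of_lintegral_ne_top (by fun_prop) ?_
      rw [lintegral_const_mul' _ _ hCfin]
      refine ENNReal.mul_ne_top hCfin (ne_of_lt ?_)
      refine lt_of_le_of_lt ?_ hφdiv
      exact (lintegral_mono_set (Ioc_subset_Ioc_right (min_le_left _ _))).trans
        (lintegral_sq_inv_mul_lintegral_Ioc_le hφm)
    refine hI.congr_fun (fun r hr => ?_) measurableSet_Ioc
    have hr' : 0 ≤ r⁻¹ := inv_nonneg.2 hr.1.le
    simp only [ENNReal.toReal_mul, ENNReal.toReal_ofReal hr',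
      ENNReal.toReal_ofReal (Real.rpow_nonneg hr.1.le _)]
    rw [Real.rpow_neg hr.1.le, Real.rpow_two]
    field_simp
  · rintro r ⟨hr0, hrT⟩ x hx
    set D := ball (Ψ z) R ∩ ball x r with hD
    have hDo : IsOpen D := isOpen_ball.inter isOpen_ball
    by_cases hint : IntegrableOn (f ∘ Φ) D
    swap
    · have h1 : setAvg (f ∘ Φ) D = 0 := by rw [setAvg, integral_undef hint, mul_zero]
      rw [h1, setAvg, integral_undef, mul_zero]
      · exact ENNReal.toReal_nonneg
      · intro h
        apply hint
        simp only [sub_zero] at h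
        exact (integrable_norm_iff
          (hf.comp hΦ.continuous.measurable).aestronglyMeasurable).1 h
    obtain ⟨x₀, hin, hout⟩ :=
      exists_ball_subset_inter hr0 (hrT.trans (min_le_right _ _)) hx
    have hrt : r ≤ t₀ := hrT.trans (min_le_left _ _)
    have hloc : ∀ y s, 0 < s → s ≤ r / 2 / 8 → ball y (8 * s) ⊆ D →
        ∃ c : ℝ, ∫⁻ u in ball y s, ‖(f ∘ Φ) u - c‖ₑ ≤ ((2 ^ d * ENNReal.ofReal (4 ^ d)) *
          ⨍⁻ σ in Ioc (2 * s) (128 / 63 * s), φ σ ∂volume) * volume (ball y s) := by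
      intro y s hs hsr hys
      have hvol : volume (Ioc (2 * s) (128 / 63 * s)) = ENNReal.ofReal (2 / 63 * s) := by
        rw [Real.volume_Ioc]; congr 1; ring
      obtain ⟨σ, hσ, hσle⟩ := exists_le_setLAverage (μ := volume) (f := φ)
        (s := Ioc (2 * s) (128 / 63 * s))
        (by rw [hvol]; simpa using hs) (by rw [hvol]; exact ENNReal.ofReal_ne_top)
        (hφm.mono_measure (Measure.restrict_mono
          (Ioc_subset_Ioc (by positivity) (by linarith)) le_rfl))
      have hσ0 : 0 < σ := by linarith [hσ.1]
      have hσ4 : σ ≤ 4 * s := by linarith [hσ.2]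
      have hσt : σ ≤ t₀ := by linarith
      have hyz : dist y (Ψ z) < R := (hys (mem_ball_self (by positivity))).1
      have hΦy : dist (Φ y) z < 2 * R := by
        have := hΦL.dist_le_mul y (Ψ z)
        rw [hinv₂] at this
        push_cast at this
        linarith
      have hrR : r ≤ R := hrT.trans (min_le_right _ _)
      have hinter : ball z (4 * R) ∩ ball (Φ y) σ = ball (Φ y) σ :=
        inter_eq_right.2 (ball_subset_ball' (by linarith))
      have hosc := hw σ ⟨hσ0, hσt⟩ (Φ y) (by rw [mem_ball]; linarith)
      rw [hinter] at hosc
      refine ⟨_, (setLIntegral_comp_sub_le hf hΦL hΨL hinv₁ hinv₂ hDo.measurableSet hint hs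
        hσ.1.le hσ4 hys hosc).trans ?_⟩
      gcongr
    obtain ⟨c, hc⟩ := setLIntegral_convex_le hDo ((convex_ball _ _).inter (convex_ball _ _))
      (half_pos hr0) hin hout (hf.comp hΦ.continuous.measurable)
      (v := fun s => (2 ^ d * ENNReal.ofReal (4 ^ d)) *
        ⨍⁻ σ in Ioc (2 * s) (128 / 63 * s), φ σ ∂volume) hloc
    have hsum : ∑' i : ℕ, ENNReal.ofReal (θ ^ i) * ((2 ^ d * ENNReal.ofReal (4 ^ d)) *
        ⨍⁻ σ in Ioc (2 * (θ ^ i * (r / 2 / 8))) (128 / 63 * (θ ^ i * (r / 2 / 8))), φ σ ∂volume) ≤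
        (2 ^ d * ENNReal.ofReal (4 ^ d)) * (504 * (ENNReal.ofReal r⁻¹ * F r)) := by
      simp only [mul_left_comm (ENNReal.ofReal (θ ^ _))]
      rw [ENNReal.tsum_mul_left]
      gcongr
      refine (tsum_setLAverage_le (by positivity) φ).trans ?_
      rw [← mul_assoc]
      gcongr
      · rw [← ENNReal.ofReal_inv_of_pos (by positivity),
          show (2 / 63 * (r / 2 / 8))⁻¹ = 504 * r⁻¹ by field_simp; norm_num,
          ENNReal.ofReal_mul (by norm_num)]
        simp
      · exact lintegral_mono_set (Ioc_subset_Ioc_right (by linarith))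
    have h0 : volume D ≠ 0 := (lt_of_lt_of_le (measure_ball_pos _ x₀ (half_pos hr0))
      (measure_mono hin)).ne'
    have hfin : volume D ≠ ∞ := measure_ne_top_of_subset inter_subset_left measure_ball_lt_top.ne
    refine (setAvg_abs_sub_setAvg_le hint h0 hfin (c := c)
      (a := ENNReal.ofReal (768 * (d + 1) * 100 ^ d) * ((2 ^ d * ENNReal.ofReal (4 ^ d)) *
        (504 * (ENNReal.ofReal r⁻¹ * F r)))) ?_ ?_).trans ?_
    · have := hFfin r hrt
      finiteness
    · refine hc.trans ?_
      rw [mul_right_comm]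
      gcongr
    · apply le_of_eq
      congr 1
      rw [hC]
      ring
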